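/- Let d ≥ 2 and 1 ≤ q ≤ ∞. Then the map f ↦ ∇M_R f is bounded from ℓ^1(ℤ^d) to ℓ^q(ℤ^d) — i.e., there exists a constant C such that ( Σ_{n ∈ ℤ^d} Σ_{l=1}^d |D_l M_R f(n)|^q )^{1/q} ≤ C ‖f‖_{ℓ^1(ℤ^d)} for every f ∈ ℓ^1(ℤ^d) (with the corresponding supremum norm when q = ∞) — if and only if q > 1. -/

import Mathlib

/-!
For the Dirac mass at the origin the strong maximal function is `K(n) = ∏ i, 1 / (|n i| + 1)`,
because a box containing both `n` and `0` has at least `∏ i, (|n i| + 1)` lattice points. By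
sublinearity `M_R f ≤ |f| * K` (discrete convolution) for every `f`: this is `discStrongMax_le`.

If `1 < q < ∞`, then `∑ n, K n ^ q ≤ (∑ m : ℤ, (|m| + 1) ^ (-q)) ^ d < ∞`, so Young's convolution
inequality `ℓ¹ * ℓ^q ⊆ ℓ^q` (`tsum_discStrongMax_rpow_le`) bounds `M_R f` in `ℓ^q`, and hence also
its gradient, by the triangle inequality. If `q = ∞`, then `M_R f ≤ ‖f‖₁` pointwise.

If `q = 1`, take `f` to be the Dirac mass at the origin. At `n = y e₁`, with `y ≥ 0`, the value of
the maximal function is at least `1 / (y + 1)`, while at `n + e₀` it is at most `1 / (2 (y + 1))`.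
The derivatives in direction `e₀` along this line thus dominate half of the harmonic series.
-/

open MeasureTheory ENNReal

/-- The set of lattice points of `ℤ^d` inside the open rectangle `∏ (a i, b i) ⊂ ℝ^d`. -/
def latticeBox {d : ℕ} (a b : Fin d → ℝ) : Set (Fin d → ℤ) :=
  {k | ∀ i, a i < (k i : ℝ) ∧ (k i : ℝ) < b i}

/-- The discrete multilinear strong maximal function `𝕄_R(f₁,…,f_m)(n)`, with values
in `[0,∞]`; for `m = 1` this is the discrete strong maximal function `M_R f`. -/
noncomputable def discMStrongMax {d m : ℕ} (f : Fin m → (Fin d → ℤ) → ℝ)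
    (n : Fin d → ℤ) : ℝ≥0∞ :=
  ⨆ (a : Fin d → ℝ) (b : Fin d → ℝ) (_ : n ∈ latticeBox a b),
    (∏ i : Fin m, ∑' k : Fin d → ℤ,
        (latticeBox a b).indicator (fun k => ENNReal.ofReal |f i k|) k)
      / ((latticeBox a b).ncard : ℝ≥0∞) ^ m

/-- The discrete strong maximal function of a single function `f : ℤ^d → ℝ`. -/
noncomputable def discStrongMax {d : ℕ} (f : (Fin d → ℤ) → ℝ) (n : Fin d → ℤ) : ℝ≥0∞ :=
  discMStrongMax (fun _ : Fin 1 => f) n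

/-- The product kernel `∏ i, 1 / (|n i| + 1)`, which is the strong maximal function of the Dirac
mass at the origin. -/
noncomputable def strongKernel {d : ℕ} (n : Fin d → ℤ) : ℝ≥0∞ :=
  ∏ i, (((n i).natAbs + 1 : ℕ) : ℝ≥0∞)⁻¹

/-! ### Pointwise bounds -/

lemma latticeBox_finite {d : ℕ} (a b : Fin d → ℝ) : (latticeBox a b).Finite := by
  refine (Set.finite_Icc (fun i => ⌊a i⌋) (fun i => ⌈b i⌉)).subset fun k hk => ?_
  refine ⟨fun i => ?_, fun i => ?_⟩
  · exact Int.floor_le_iff.2 (by linarith [(hk i).1])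
  · exact Int.le_ceil_iff.2 (by linarith [(hk i).2])

/-- A box containing `n` and `k` contains the order interval they span. -/
lemma prod_le_ncard_latticeBox {d : ℕ} {a b : Fin d → ℝ} {n k : Fin d → ℤ}
    (hn : n ∈ latticeBox a b) (hk : k ∈ latticeBox a b) :
    ∏ i, (((n - k) i).natAbs + 1) ≤ (latticeBox a b).ncard := by
  have h1 : ((Finset.uIcc k n : Finset (Fin d → ℤ)) : Set (Fin d → ℤ)) ⊆ latticeBox a b := by
    intro x hx i
    rw [Finset.mem_coe, Finset.mem_uIcc] at hx
    have h1 : min (k i) (n i) ≤ x i := hx.1 i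
    have h2 : x i ≤ max (k i) (n i) := hx.2 i
    constructor
    · rcases min_le_iff.1 h1 with h | h
      · exact (hk i).1.trans_le (by exact_mod_cast h)
      · exact (hn i).1.trans_le (by exact_mod_cast h)
    · rcases le_max_iff.1 h2 with h | h
      · exact lt_of_le_of_lt (by exact_mod_cast h) (hk i).2
      · exact lt_of_le_of_lt (by exact_mod_cast h) (hn i).2
  have h2 := Set.ncard_le_ncard h1 (latticeBox_finite a b)
  rwa [Set.ncard_coe_finset, Pi.card_uIcc, Finset.prod_congr rfl fun i _ => Int.card_uIcc _ _] at h2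

lemma strongKernel_le_one {d : ℕ} (n : Fin d → ℤ) : strongKernel n ≤ 1 :=
  Finset.prod_le_one' fun i _ => ENNReal.inv_le_one.2 (by simp)

lemma strongKernel_eq {d : ℕ} (n : Fin d → ℤ) :
    strongKernel n = ((∏ i, ((n i).natAbs + 1) : ℕ) : ℝ≥0∞)⁻¹ := by
  rw [strongKernel, Nat.cast_prod, ENNReal.prod_inv_distrib]
  intro i _ j _ _
  exact Or.inl (by simp)

/-- The strong maximal function of `f` is dominated by the convolution of `|f|` with the maximal
function of the Dirac mass. -/
lemma discStrongMax_le {d : ℕ} (f : (Fin d → ℤ) → ℝ) (n : Fin d → ℤ) :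
    discStrongMax f n ≤ ∑' k, ENNReal.ofReal |f k| * strongKernel (n - k) := by
  refine iSup_le fun a => iSup_le fun b => iSup_le fun hn => ?_
  simp only [Finset.univ_unique, Finset.prod_singleton, pow_one, div_eq_mul_inv]
  rw [← ENNReal.tsum_mul_right]
  refine ENNReal.tsum_le_tsum fun k => ?_
  by_cases hk : k ∈ latticeBox a b
  · rw [Set.indicator_of_mem hk, strongKernel_eq]
    gcongr
    exact prod_le_ncard_latticeBox hn hk
  · simp [Set.indicator_of_notMem hk]

lemma discStrongMax_le_tsum {d : ℕ} (f : (Fin d → ℤ) → ℝ) (n : Fin d → ℤ) :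
    discStrongMax f n ≤ ∑' k, ENNReal.ofReal |f k| :=
  (discStrongMax_le f n).trans <| ENNReal.tsum_le_tsum fun _ =>
    mul_le_of_le_one_right' (strongKernel_le_one _)

/-! ### The `ℓ^p` bound -/

/-- Jensen's inequality for the weights `w`. -/
lemma tsum_mul_rpow_le {ι : Type*} (w g : ι → ℝ≥0∞) {p : ℝ} (hp : 1 < p) :
    (∑' k, w k * g k) ^ p ≤ (∑' k, w k) ^ (p - 1) * ∑' k, w k * g k ^ p := by
  have hp0 : 0 < p := by linarith
  have h : ∑' k, w k * g k ≤ (∑' k, w k) ^ (1 - p⁻¹) * (∑' k, w k * g k ^ p) ^ p⁻¹ := by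
    rw [ENNReal.tsum_eq_iSup_sum]
    refine iSup_le fun s => (ENNReal.inner_le_weight_mul_Lp_of_nonneg s hp.le w g).trans ?_
    have : 0 ≤ 1 - p⁻¹ := by linarith [inv_lt_one_of_one_lt₀ hp]
    gcongr
    · exact ENNReal.sum_le_tsum s
    · exact ENNReal.sum_le_tsum s
  refine (ENNReal.rpow_le_rpow h hp0.le).trans_eq ?_
  rw [ENNReal.mul_rpow_of_nonneg _ _ hp0.le, ← ENNReal.rpow_mul, ← ENNReal.rpow_mul,
    inv_mul_cancel₀ hp0.ne', ENNReal.rpow_one, sub_mul, inv_mul_cancel₀ hp0.ne', one_mul]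

lemma tsum_strongKernel_rpow_ne_top (d : ℕ) {p : ℝ} (hp : 1 < p) :
    ∑' n : Fin d → ℤ, strongKernel n ^ p ≠ ∞ := by
  classical
  have hp0 : 0 < p := by linarith
  set g : ℤ → ℝ≥0∞ := fun m => ((m.natAbs + 1 : ℕ) : ℝ≥0∞)⁻¹ ^ p with hg
  have hg1 : ∑' m, g m ≠ ∞ := by
    have hs : Summable fun m : ℤ => (((m.natAbs + 1 : ℕ) : ℝ) ^ p)⁻¹ := by
      have h0 := (Real.summable_nat_rpow_inv (p := p)).2 hp
      refine Summable.of_nat_of_neg_add_one ?_ ?_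
      · exact (summable_nat_add_iff 1).2 h0
      · convert! (summable_nat_add_iff 2).2 h0 using 5 with n
    have := hs.tsum_ofReal_ne_top
    convert this using 4 with m
    simp only [hg]
    rw [ENNReal.ofReal_inv_of_pos (by positivity),
      ← ENNReal.ofReal_rpow_of_nonneg (by positivity) hp0.le, ENNReal.ofReal_natCast,
      ENNReal.inv_rpow]
  refine ne_top_of_le_ne_top (ENNReal.pow_ne_top (n := d) hg1) ?_
  rw [ENNReal.tsum_eq_iSup_sum]
  refine iSup_le fun s => ?_
  -- A finite set of lattice points lies in the product of its coordinate projections.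
  calc ∑ n ∈ s, strongKernel n ^ p
      ≤ ∑ n ∈ Fintype.piFinset fun i => s.image fun n => n i, strongKernel n ^ p := by
        refine Finset.sum_le_sum_of_subset fun n hn => ?_
        rw [Fintype.mem_piFinset]
        exact fun i => Finset.mem_image_of_mem (fun n : Fin d → ℤ => n i) hn
    _ = ∏ i, ∑ m ∈ s.image fun n => n i, g m := by
        rw [Finset.prod_univ_sum]
        refine Finset.sum_congr rfl fun n _ => ?_
        rw [strongKernel, ENNReal.prod_rpow_of_nonneg hp0.le]
    _ ≤ ∏ _i : Fin d, ∑' m, g m := Finset.prod_le_prod' fun i _ => ENNReal.sum_le_tsum _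
    _ = (∑' m, g m) ^ d := by simp

/-- Young's inequality `‖|f| * K‖_p ≤ ‖f‖₁ ‖K‖_p`, applied to the maximal function. -/
lemma tsum_discStrongMax_rpow_le {d : ℕ} (f : (Fin d → ℤ) → ℝ) {p : ℝ} (hp : 1 < p) :
    ∑' n, discStrongMax f n ^ p ≤
      (∑' k, ENNReal.ofReal |f k|) ^ p * ∑' n : Fin d → ℤ, strongKernel n ^ p := by
  set w := fun k => ENNReal.ofReal |f k| with hw
  have hp0 : 0 < p := by linarith
  calc ∑' n, discStrongMax f n ^ p
      ≤ ∑' n, (∑' k, w k) ^ (p - 1) * ∑' k, w k * strongKernel (n - k) ^ p :=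
        ENNReal.tsum_le_tsum fun n => (ENNReal.rpow_le_rpow (discStrongMax_le f n) hp0.le).trans
          (tsum_mul_rpow_le w _ hp)
    _ = (∑' k, w k) ^ (p - 1) * ∑' k, ∑' n, w k * strongKernel (n - k) ^ p := by
        rw [ENNReal.tsum_mul_left, ENNReal.tsum_comm]
    _ = (∑' k, w k) ^ (p - 1) * ((∑' k, w k) * ∑' n : Fin d → ℤ, strongKernel n ^ p) := by
        rw [← ENNReal.tsum_mul_right]
        congr 1
        refine tsum_congr fun k => ?_
        rw [ENNReal.tsum_mul_left]
        congr 1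
        exact (Equiv.subRight k).tsum_eq fun n => strongKernel n ^ p
    _ = _ := by
        rw [← mul_assoc]
        congr 1
        conv_lhs => rw [← ENNReal.rpow_one (∑' k, w k), ← ENNReal.rpow_mul, one_mul]
        rw [← ENNReal.rpow_add_of_nonneg _ _ (by linarith) zero_le_one, sub_add_cancel]

lemma enorm_toReal_le (x : ℝ≥0∞) : ‖x.toReal‖ₑ ≤ x := by
  rw [Real.enorm_eq_ofReal ENNReal.toReal_nonneg]
  exact ENNReal.ofReal_toReal_le

/-- The `ℓ^q` norm over pairs (point, direction) of the maximal function sampled at a point shifted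
by `v l`, where `l` is the direction. -/
lemma eLpNorm_shift_le {d : ℕ} (f : (Fin d → ℤ) → ℝ) (v : Fin d → Fin d → ℤ) {q : ℝ≥0∞}
    (hq : 1 < q) (hq' : q ≠ ∞) :
    eLpNorm (fun z : (Fin d → ℤ) × Fin d => (discStrongMax f (z.1 + v z.2)).toReal) q
        Measure.count ≤
      (d * ∑' n : Fin d → ℤ, strongKernel n ^ q.toReal) ^ (1 / q.toReal) *
        ∑' k, ENNReal.ofReal |f k| := by
  have hp : 1 < q.toReal := by
    rw [← ENNReal.toReal_one]
    exact (ENNReal.toReal_lt_toReal ENNReal.one_ne_top hq').2 hq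
  set p := q.toReal with hp_def
  have hp0 : 0 < p := by linarith
  rw [eLpNorm_eq_lintegral_rpow_enorm_toReal (zero_lt_one.trans hq).ne' hq', lintegral_count,
    ← hp_def]
  have key : ∑' z : (Fin d → ℤ) × Fin d, ‖(discStrongMax f (z.1 + v z.2)).toReal‖ₑ ^ p ≤
      (d * ∑' n : Fin d → ℤ, strongKernel n ^ p) * (∑' k, ENNReal.ofReal |f k|) ^ p := by
    calc ∑' z : (Fin d → ℤ) × Fin d, ‖(discStrongMax f (z.1 + v z.2)).toReal‖ₑ ^ p
        ≤ ∑' z : (Fin d → ℤ) × Fin d, discStrongMax f (z.1 + v z.2) ^ p :=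
          ENNReal.tsum_le_tsum fun z => ENNReal.rpow_le_rpow (enorm_toReal_le _) hp0.le
      _ = ∑' (l : Fin d) (n : Fin d → ℤ), discStrongMax f (n + v l) ^ p := by
          rw [ENNReal.tsum_prod', ENNReal.tsum_comm]
      _ = ∑' (l : Fin d) (n : Fin d → ℤ), discStrongMax f n ^ p :=
          tsum_congr fun l => (Equiv.addRight (v l)).tsum_eq fun n => discStrongMax f n ^ p
      _ = d * ∑' n : Fin d → ℤ, discStrongMax f n ^ p := by
          rw [tsum_fintype]; simp
      _ ≤ _ := by
          rw [mul_assoc, mul_comm (∑' n : Fin d → ℤ, strongKernel n ^ p)]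
          gcongr
          exact tsum_discStrongMax_rpow_le f hp
  refine (ENNReal.rpow_le_rpow key (by positivity)).trans_eq ?_
  rw [ENNReal.mul_rpow_of_nonneg _ _ (by positivity), ← ENNReal.rpow_mul, mul_one_div_cancel hp0.ne',
    ENNReal.rpow_one]

/-! ### Failure at `q = 1` -/

lemma discStrongMax_single_le {d : ℕ} (n : Fin d → ℤ) :
    discStrongMax (Pi.single 0 1) n ≤ strongKernel n := by
  refine (discStrongMax_le _ n).trans ?_
  rw [tsum_eq_single 0]
  · simp
  · intro k hk
    simp [hk]

lemma le_discStrongMax_single {d : ℕ} (i : Fin d) (y : ℕ) :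
    ((y + 1 : ℕ) : ℝ≥0∞)⁻¹ ≤ discStrongMax (Pi.single 0 1) (Pi.single i (y : ℤ)) := by
  set n : Fin d → ℤ := Pi.single i (y : ℤ) with hn
  -- The smallest box containing `0` and `n`.
  set a : Fin d → ℝ := fun _ => -1 / 2 with ha
  set b : Fin d → ℝ := fun j => n j + 1 / 2 with hb
  have hn0 : ∀ j, 0 ≤ n j := fun j => by
    by_cases h : j = i
    · subst h; simp [hn]
    · simp [hn, h]
  have hmem : n ∈ latticeBox a b := fun j => by
    have : (0 : ℝ) ≤ n j := by exact_mod_cast hn0 j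
    constructor <;> simp only [ha, hb] <;> linarith
  have hmem0 : (0 : Fin d → ℤ) ∈ latticeBox a b := fun j => by
    have : (0 : ℝ) ≤ n j := by exact_mod_cast hn0 j
    constructor <;> simp only [ha, hb, Pi.zero_apply, Int.cast_zero] <;> linarith
  have hcard : (latticeBox a b).ncard ≤ y + 1 := by
    have hsub : latticeBox a b ⊆ ((Finset.Icc 0 n : Finset (Fin d → ℤ)) : Set (Fin d → ℤ)) := by
      intro k hk
      rw [Finset.coe_Icc]
      refine ⟨fun j => ?_, fun j => ?_⟩
      · have h1 : (-1 : ℝ) < k j := by have := (hk j).1; simp only [ha] at this; linarith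
        have h2 : (-1 : ℤ) < k j := by exact_mod_cast h1
        simp only [Pi.zero_apply]; omega
      · have h1 : (k j : ℝ) < n j + 1 := by have := (hk j).2; simp only [hb] at this; linarith
        have h2 : k j < n j + 1 := by exact_mod_cast h1
        exact Int.lt_add_one_iff.1 h2
    refine (Set.ncard_le_ncard hsub (Finset.finite_toSet _)).trans ?_
    rw [Set.ncard_coe_finset, Pi.card_Icc, Finset.prod_eq_single i]
    · simp [hn]
    · intro j _ hj
      simp [hn, hj]
    · simp
  refine le_trans ?_ (le_iSup_of_le a <| le_iSup_of_le b <| le_iSup_of_le hmem le_rfl)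
  simp only [Finset.univ_unique, Finset.prod_singleton, pow_one, div_eq_mul_inv]
  rw [tsum_eq_single 0]
  · rw [Set.indicator_of_mem hmem0]
    simp only [Pi.single_eq_same, abs_one, ENNReal.ofReal_one, one_mul]
    gcongr
  · intro k hk
    simp [hk]

lemma strongKernel_two {d : ℕ} {i j : Fin d} (hij : i ≠ j) (y : ℕ) :
    strongKernel (Pi.single j (y : ℤ) + Pi.single i 1) = 2⁻¹ * ((y + 1 : ℕ) : ℝ≥0∞)⁻¹ := by
  rw [strongKernel, ← Finset.prod_subset (Finset.subset_univ {i, j}), Finset.prod_pair hij]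
  · simp [hij, hij.symm, one_add_one_eq_two]
  · intro l _ hl
    simp only [Finset.mem_insert, Finset.mem_singleton, not_or] at hl
    simp [hl.1, hl.2]

lemma half_inv_le_enorm_sub {x z : ℝ≥0∞} (y : ℕ) (hx : x ≤ 2⁻¹ * ((y + 1 : ℕ) : ℝ≥0∞)⁻¹)
    (hz : ((y + 1 : ℕ) : ℝ≥0∞)⁻¹ ≤ z) (hz' : z ≠ ∞) :
    ENNReal.ofReal (2⁻¹ * ((y + 1 : ℕ) : ℝ)⁻¹) ≤ ‖x.toReal - z.toReal‖ₑ := by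
  have h1 := ENNReal.toReal_mono hz' hz
  have h3 := ENNReal.toReal_mono (by simp [ENNReal.mul_eq_top]) hx
  rw [ENNReal.toReal_inv, ENNReal.toReal_natCast] at h1
  rw [ENNReal.toReal_mul, ENNReal.toReal_inv, ENNReal.toReal_inv, ENNReal.toReal_natCast,
    ENNReal.toReal_ofNat] at h3
  rw [Real.enorm_eq_ofReal_abs]
  refine ENNReal.ofReal_le_ofReal (le_trans ?_ (neg_le_abs _))
  linarith

lemma half_inv_le_enorm {d : ℕ} {i j : Fin d} (hij : i ≠ j) (y : ℕ) :
    ENNReal.ofReal (2⁻¹ * ((y + 1 : ℕ) : ℝ)⁻¹) ≤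
      ‖(discStrongMax (Pi.single 0 1) (Pi.single j (y : ℤ) + Pi.single i 1)).toReal -
        (discStrongMax (Pi.single 0 1) (Pi.single j (y : ℤ))).toReal‖ₑ :=
  half_inv_le_enorm_sub y ((discStrongMax_single_le _).trans_eq (strongKernel_two hij y))
    (le_discStrongMax_single j y)
    (ne_top_of_le_ne_top ENNReal.one_ne_top
      ((discStrongMax_single_le _).trans (strongKernel_le_one _)))

theorem statement14 (d : ℕ) (hd : 2 ≤ d) (q : ℝ≥0∞) (hq : 1 ≤ q) :
    (∃ C : ℝ≥0∞, C ≠ ∞ ∧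
      ∀ f : (Fin d → ℤ) → ℝ, (Summable fun n => |f n|) →
        eLpNorm (fun z : (Fin d → ℤ) × Fin d =>
            (discStrongMax f (z.1 + Pi.single z.2 1)).toReal -
              (discStrongMax f z.1).toReal) q Measure.count ≤
          C * ENNReal.ofReal (∑' n : Fin d → ℤ, |f n|)) ↔ 1 < q := by
  constructor
  · rintro ⟨C, hC, h⟩
    refine lt_of_le_of_ne hq ?_
    rintro rfl
    have hij : (⟨0, by omega⟩ : Fin d) ≠ ⟨1, by omega⟩ := by simp
    set i : Fin d := ⟨0, by omega⟩
    set j : Fin d := ⟨1, by omega⟩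
    have hsum : HasSum (fun n : Fin d → ℤ => |(Pi.single 0 1 : (Fin d → ℤ) → ℝ) n|) 1 := by
      have := hasSum_single (f := fun n : Fin d → ℤ => |(Pi.single 0 1 : (Fin d → ℤ) → ℝ) n|) 0
        (fun n hn => by simp [hn])
      simpa only [Pi.single_eq_same, abs_one] using this
    have h1 := h _ hsum.summable
    rw [hsum.tsum_eq, ENNReal.ofReal_one, mul_one, eLpNorm_one_eq_lintegral_enorm,
      lintegral_count] at h1
    have hinj : Function.Injective fun y : ℕ => ((Pi.single j (y : ℤ) : Fin d → ℤ), i) := by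
      intro y y' hy
      have := congrFun (Prod.ext_iff.1 hy).1 j
      simpa using this
    have h2 : ∑' y : ℕ, ENNReal.ofReal (2⁻¹ * ((y + 1 : ℕ) : ℝ)⁻¹) ≤ C :=
      (ENNReal.tsum_le_tsum fun y => half_inv_le_enorm hij y).trans
        ((ENNReal.tsum_comp_le_tsum_of_injective hinj _).trans h1)
    have h3 : Summable fun y : ℕ => 2⁻¹ * ((y + 1 : ℕ) : ℝ)⁻¹ := by
      refine (ENNReal.summable_toReal (ne_top_of_le_ne_top hC h2)).congr fun y => ?_
      rw [ENNReal.toReal_ofReal (by positivity)]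
    rw [summable_mul_left_iff (by norm_num)] at h3
    exact Real.not_summable_natCast_inv
      ((summable_nat_add_iff (f := fun n : ℕ => (n : ℝ)⁻¹) 1).1 h3)
  · intro hq1
    have hW : ∀ f : (Fin d → ℤ) → ℝ, (Summable fun n => |f n|) →
        ENNReal.ofReal (∑' n, |f n|) = ∑' n, ENNReal.ofReal |f n| := fun f hf =>
      ENNReal.ofReal_tsum_of_nonneg (fun _ => abs_nonneg _) hf
    by_cases hq' : q = ∞
    · subst hq'
      refine ⟨2, by simp, fun f hf => ?_⟩
      rw [hW f hf, eLpNorm_exponent_top]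
      refine essSup_le_of_ae_le _ (Filter.Eventually.of_forall fun z => ?_)
      rw [two_mul]
      exact enorm_sub_le.trans (add_le_add
        ((enorm_toReal_le _).trans (discStrongMax_le_tsum f _))
        ((enorm_toReal_le _).trans (discStrongMax_le_tsum f _)))
    · have hp : 1 < q.toReal := by
        rw [← ENNReal.toReal_one]
        exact (ENNReal.toReal_lt_toReal ENNReal.one_ne_top hq').2 hq1
      refine ⟨2 * (d * ∑' n : Fin d → ℤ, strongKernel n ^ q.toReal) ^ (1 / q.toReal), ?_,
        fun f hf => ?_⟩
      · exact ENNReal.mul_ne_top (by simp) (ENNReal.rpow_ne_top_of_nonneg (by positivity)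
          (ENNReal.mul_ne_top (by simp) (tsum_strongKernel_rpow_ne_top d hp)))
      · have hm : ∀ g : (Fin d → ℤ) × Fin d → ℝ, AEStronglyMeasurable g Measure.count := fun g =>
          (measurable_of_countable g).aestronglyMeasurable
        rw [hW f hf, mul_assoc, two_mul]
        refine (eLpNorm_sub_le (hm _) (hm _) hq).trans (add_le_add ?_ ?_)
        · exact eLpNorm_shift_le f (fun l => Pi.single l 1) hq1 hq'
        · simpa using eLpNorm_shift_le f (fun _ => 0) hq1 hq'
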